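/- arXiv:1903.03923 — 3 statements merged into one kernel-verified Lean document; each statement's English description precedes it below -/
import Mathlib

section
/- Let n = 2^e · p_1^{e_1} ⋯ p_r^{e_r} with p_1 < ⋯ < p_r distinct odd primes, e ≥ 0 and e_i ≥ 1 integers, and let k be a positive integer and a ∈ (ℤ/nℤ)^×. Then the Dickson polynomial D_k(x, a) of the first kind is a permutation polynomial on ℤ/nℤ (i.e., the evaluation map u ↦ D_k(u, a) is a bijection of ℤ/nℤ) if and only if gcd(k, w(n)) = 1. -/
open Polynomial

/-!
By the Chinese remainder theorem the question is local at each prime power `p ^ m`. A polynomial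
over a finite local ring which is not a field permutes the ring iff it permutes the residue field
and its derivative has no zero there: Hensel-type uniqueness of lifts gives one direction, and
`f(x + t) = f(x) + f'(x) t` for `t` annihilated by the maximal ideal gives the other.

Over the field with `q` elements, write `x = y + a / y` with `y` in an algebraic closure. Then
`D_k(x, a) = y ^ k + a ^ k / y ^ k`, and `x` is rational iff `y ^ (q - 1) = 1` or `y ^ (q + 1) = a`,
so all these `y` are `(q ^ 2 - 1)`-th roots of unity. If `k` is coprime to `q ^ 2 - 1`, then
`y ^ k` determines `y` and `D_k` permutes the field; otherwise, multiplying `y` by roots of unity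
whose order is a common prime factor produces distinct `x` with the same value. In the coprime
case the derivative `D_k' = k U_{k - 1}`, with `U` the Dickson polynomial of the second kind, has
no zero iff `k ≠ 0` in the field. Altogether `D_k` permutes `ℤ / p ^ m` iff `k` is coprime to
`p ^ (m - 1) (p ^ 2 - 1)`, which has the same prime divisors as the corresponding factor of `w(n)`.
-/

section PermutationPolynomials

/-- `f` is a permutation polynomial on `R`: the evaluation map `x ↦ f(x)` permutes `R`. -/
def IsPermPoly {R : Type*} [Semiring R] (f : R[X]) : Prop :=
  Function.Bijective fun x : R => f.eval x

theorem isPermPoly_of_subsingleton {R : Type*} [Semiring R] [Subsingleton R] (f : R[X]) :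
    IsPermPoly f :=
  ⟨Function.injective_of_subsingleton _, fun y => ⟨y, Subsingleton.elim _ _⟩⟩

theorem isPermPoly_map_equiv_iff {R S : Type*} [Semiring R] [Semiring S] (σ : R ≃+* S)
    (f : R[X]) : IsPermPoly (f.map (σ : R →+* S)) ↔ IsPermPoly f := by
  have hconj : (fun x => f.eval x) = σ.symm ∘ (fun x => (f.map (σ : R →+* S)).eval x) ∘ σ := by
    funext x
    simpa using congrArg σ.symm (eval_map_apply (σ : R →+* S) x).symm
  rw [IsPermPoly, IsPermPoly, hconj, σ.symm.bijective.of_comp_iff', σ.bijective.of_comp_iff]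

theorem isPermPoly_prod_iff {R S : Type*} [Semiring R] [Semiring S] (f : (R × S)[X]) :
    IsPermPoly f ↔
      IsPermPoly (f.map (RingHom.fst R S)) ∧ IsPermPoly (f.map (RingHom.snd R S)) := by
  have hmap : (fun x => f.eval x) = Prod.map (fun y => (f.map (RingHom.fst R S)).eval y)
      (fun z => (f.map (RingHom.snd R S)).eval z) := by
    funext x
    exact Prod.ext (eval_map_apply (RingHom.fst R S) x).symm
      (eval_map_apply (RingHom.snd R S) x).symm
  rw [IsPermPoly, hmap, Prod.map_bijective, IsPermPoly, IsPermPoly]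

theorem isPermPoly_pi_iff {ι : Type*} {R : ι → Type*} [∀ i, Semiring (R i)]
    (f : (∀ i, R i)[X]) :
    IsPermPoly f ↔ ∀ i, IsPermPoly (f.map (Pi.evalRingHom R i)) := by
  classical
  have hmap : (fun x => f.eval x) =
      Pi.map fun i y => (f.map (Pi.evalRingHom R i)).eval y := by
    funext x i
    exact (eval_map_apply (Pi.evalRingHom R i) x).symm
  rw [IsPermPoly, hmap]
  refine ⟨fun h i => ⟨Pi.map_injective.1 h.1 i, fun z => ?_⟩, fun h => .piMap h⟩
  obtain ⟨x, hx⟩ := h.2 (Pi.single i z)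
  exact ⟨x i, by simpa using congrFun hx i⟩

theorem isPermPoly_zmod_mul_iff {m n : ℕ} (hmn : m.Coprime n) (f : (ZMod (m * n))[X]) :
    IsPermPoly f ↔
      IsPermPoly (f.map (ZMod.castHom (dvd_mul_right m n) (ZMod m))) ∧
        IsPermPoly (f.map (ZMod.castHom (dvd_mul_left n m) (ZMod n))) := by
  rw [← isPermPoly_map_equiv_iff (ZMod.chineseRemainder hmn), isPermPoly_prod_iff, map_map,
    map_map]
  congr! 3 <;> exact Subsingleton.elim _ _

theorem isPermPoly_zmod_prod_iff {ι : Type*} [Fintype ι] {m : ι → ℕ}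
    (hm : Pairwise (Function.onFun Nat.Coprime m)) (f : (ZMod (∏ i, m i))[X]) :
    IsPermPoly f ↔ ∀ i, IsPermPoly
      (f.map (ZMod.castHom (Finset.dvd_prod_of_mem m (Finset.mem_univ i)) (ZMod (m i)))) := by
  rw [← isPermPoly_map_equiv_iff (ZMod.prodEquivPi m hm), isPermPoly_pi_iff]
  refine forall_congr' fun i => ?_
  rw [map_map]
  congr! 2
  exact Subsingleton.elim _ _

end PermutationPolynomials

section LocalRings

theorem exists_ne_zero_mem_forall_mul_eq_zero {R : Type*} [CommRing R] {I : Ideal R}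
    (hnil : IsNilpotent I) (hI : I ≠ ⊥) : ∃ t ∈ I, t ≠ 0 ∧ ∀ x ∈ I, t * x = 0 := by
  have : Nontrivial (Ideal R) := ⟨⟨I, ⊥, hI⟩⟩
  have hpos := pos_nilpotencyClass_iff.2 hnil
  have hone : nilpotencyClass I ≠ 1 := mt nilpotencyClass_eq_one.1 hI
  obtain ⟨t, ht, ht0⟩ := Submodule.exists_mem_ne_zero_of_ne_bot (pow_pred_nilpotencyClass hnil)
  refine ⟨t, Ideal.pow_le_self (by omega) ht, ht0, fun x hx => ?_⟩
  have htx := Ideal.mul_mem_mul ht hx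
  rwa [← pow_succ, Nat.sub_add_cancel hpos, pow_nilpotencyClass hnil] at htx

variable {R K : Type*} [CommRing R] [Field K] (φ : R →+* K)

theorem IsPermPoly.map_of_surjective [Finite K] (hφ : Function.Surjective φ) {f : R[X]}
    (hf : IsPermPoly f) : IsPermPoly (f.map φ) := by
  refine Finite.surjective_iff_bijective.1 fun z => ?_
  obtain ⟨y, rfl⟩ := hφ z
  obtain ⟨x, rfl⟩ := hf.2 y
  exact ⟨φ x, eval_map_apply φ x⟩

theorem injective_eval_of_isLocalHom [IsLocalHom φ] {f : R[X]}
    (hinj : Function.Injective fun x => (f.map φ).eval x)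
    (hder : ∀ x, (f.map φ).derivative.eval x ≠ 0) :
    Function.Injective fun x => f.eval x := by
  intro x y hxy
  obtain ⟨c, hc⟩ := f.binomExpansion y (x - y)
  have hres : φ x = φ y := hinj (by simpa only [eval_map_apply] using congrArg φ hxy)
  have hunit : IsUnit (f.derivative.eval y + c * (x - y)) := by
    refine isUnit_of_map_unit φ _ (IsUnit.mk0 _ ?_)
    simpa [hres, derivative_map, eval_map_apply] using hder (φ y)
  rw [add_sub_cancel, show f.eval x = f.eval y from hxy] at hc
  refine sub_eq_zero.1 (hunit.mul_right_eq_zero.1 ?_)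
  linear_combination -hc

theorem derivative_eval_map_ne_zero_of_injective [IsLocalHom φ] [IsArtinianRing R]
    (hφ : Function.Surjective φ) (hφ' : ¬ Function.Injective φ) {f : R[X]}
    (hf : Function.Injective fun x => f.eval x) (x : K) : (f.map φ).derivative.eval x ≠ 0 := by
  obtain ⟨x, rfl⟩ := hφ x
  have : IsLocalRing R := RingHom.domain_isLocalRing φ
  have hnil : IsNilpotent (RingHom.ker φ) := by
    rw [IsLocalRing.ker_eq_maximalIdeal φ hφ,
      ← IsLocalRing.jacobson_eq_maximalIdeal ⊥ bot_ne_top]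
    exact IsArtinianRing.isNilpotent_jacobson_bot
  obtain ⟨t, ht, ht0, hann⟩ := exists_ne_zero_mem_forall_mul_eq_zero hnil
    (mt (RingHom.injective_iff_ker_eq_bot φ).2 hφ')
  obtain ⟨c, hc⟩ := f.binomExpansion x t
  intro hder
  rw [derivative_map, eval_map_apply] at hder
  have heval : f.eval (x + t) = f.eval x := by
    linear_combination hc + hann _ hder + c * hann t ht
  exact ht0 (by simpa using hf heval)

theorem isPermPoly_iff_of_isLocalHom [Finite R] [IsLocalHom φ] (hφ : Function.Surjective φ)
    (hφ' : ¬ Function.Injective φ) (f : R[X]) :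
    IsPermPoly f ↔
      IsPermPoly (f.map φ) ∧ ∀ x, (f.map φ).derivative.eval x ≠ 0 := by
  have : Finite K := Finite.of_surjective φ hφ
  refine ⟨fun h => ⟨h.map_of_surjective φ hφ, ?_⟩, fun h => ?_⟩
  · exact derivative_eval_map_ne_zero_of_injective φ hφ hφ' h.1
  · exact Finite.injective_iff_bijective.1 (injective_eval_of_isLocalHom φ h.1.1 h.2)

end LocalRings

section DicksonIdentities

variable {R : Type*} [CommRing R]

lemma eval_dickson_one_add (y z : R) (k : ℕ) :
    (dickson 1 (y * z) k).eval (y + z) = y ^ k + z ^ k := by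
  induction k using Nat.twoStepInduction with
  | zero => simp only [dickson_zero, pow_zero]; norm_num
  | one => simp only [dickson_one, eval_X, pow_one]
  | more k ih ih' =>
    simp only [dickson_add_two, eval_sub, eval_mul, eval_X, eval_C, ih, ih']
    ring

lemma eval_dickson_two_add (y z : R) (k : ℕ) :
    (dickson 2 (y * z) k).eval (y + z) = ∑ i ∈ Finset.range (k + 1), y ^ i * z ^ (k - i) := by
  induction k using Nat.twoStepInduction with
  | zero => simp only [dickson_zero]; norm_num
  | one => simp [Finset.sum_range_succ, add_comm]
  | more k ih ih' =>
    have hsum := geom_sum₂_succ_eq y z (n := k + 2)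
    have hsum' := geom_sum₂_succ_eq y z (n := k + 1)
    simp only [Nat.add_sub_cancel, Nat.add_succ_sub_one] at hsum hsum'
    rw [dickson_add_two, eval_sub, eval_mul, eval_mul, eval_X, eval_C, ih, ih', hsum, hsum']
    ring

lemma eval_neg_dickson_one (a x : R) (k : ℕ) :
    (dickson 1 a k).eval (-x) = (-1) ^ k * (dickson 1 a k).eval x := by
  induction k using Nat.twoStepInduction with
  | zero => simp only [dickson_zero]; norm_num
  | one => simp
  | more k ih ih' =>
    simp only [dickson_add_two, eval_sub, eval_mul, eval_X, eval_C, ih, ih']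
    ring

lemma dickson_one_eq_dickson_two_sub (a : R) (k : ℕ) :
    dickson 1 a (k + 2) = dickson 2 a (k + 2) - C a * dickson 2 a k := by
  induction k using Nat.twoStepInduction with
  | zero =>
    rw [dickson_two, dickson_two, dickson_zero]
    push_cast
    ring
  | one =>
    simp only [dickson_add_two _ a 1, one_add_one_eq_two, dickson_two, dickson_one]
    push_cast
    ring
  | more k ih ih' =>
    rw [dickson_add_two 1, dickson_add_two 2 a (k + 2), ih, ih']
    linear_combination C a * dickson_add_two 2 a k

lemma derivative_dickson_one (a : R) (k : ℕ) :
    derivative (dickson 1 a (k + 1)) = (k + 1 : R[X]) * dickson 2 a k := by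
  induction k using Nat.twoStepInduction with
  | zero => simp only [zero_add, dickson_one, derivative_X, dickson_zero]; norm_num
  | one => norm_num [two_mul]
  | more k ih ih' =>
    rw [dickson_add_two 1 a (k + 1), derivative_sub, derivative_mul, derivative_X,
      derivative_C_mul, ih, ih', dickson_one_eq_dickson_two_sub, dickson_add_two 2 a k]
    push_cast
    ring

end DicksonIdentities

section FiniteFields

lemma eq_of_pow_eq_pow_of_coprime {G : Type*} [CommGroupWithZero G] {u v : G} {k m : ℕ}
    (hv : v ≠ 0) (hkm : k.Coprime m) (hk : u ^ k = v ^ k) (hm : u ^ m = v ^ m) : u = v := by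
  have hdiv {j : ℕ} (h : u ^ j = v ^ j) : (u / v) ^ j = 1 := by
    rw [div_pow, h, div_self (pow_ne_zero j hv)]
  rw [← div_eq_one_iff_eq hv, ← pow_one (u / v), ← hkm.gcd_eq_one]
  exact pow_gcd_eq_one.2 ⟨hdiv hk, hdiv hm⟩

lemma sq_sub_one_eq_mul (n : ℕ) : n ^ 2 - 1 = (n + 1) * (n - 1) := by
  simpa using Nat.sq_sub_sq n 1

lemma add_div_eq_add_div_iff {L : Type*} [Field L] {c y z : L} (hy : y ≠ 0) (hz : z ≠ 0) :
    y + c / y = z + c / z ↔ y = z ∨ y * z = c := by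
  have hfactor : y + c / y - (z + c / z) = (y - z) * (y * z - c) / (y * z) := by
    field_simp
    ring
  rw [← sub_eq_zero, hfactor, div_eq_zero_iff, or_iff_left (mul_ne_zero hy hz), mul_eq_zero,
    sub_eq_zero, sub_eq_zero]

lemma eval_dickson_one_add_div {L : Type*} [Field L] (c : L) {y : L} (hy : y ≠ 0) (k : ℕ) :
    (dickson 1 c k).eval (y + c / y) = y ^ k + c ^ k / y ^ k := by
  simpa only [mul_div_cancel₀ c hy, div_pow] using eval_dickson_one_add y (c / y) k

lemma exists_eq_add_div {L : Type*} [Field L] [IsAlgClosed L] {c : L} (hc : c ≠ 0) (x : L) :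
    ∃ y ≠ 0, x = y + c / y := by
  have hdeg : (X ^ 2 - C x * X + C c : L[X]).degree = 2 := by compute_degree!
  obtain ⟨y, hy⟩ := IsAlgClosed.exists_root (X ^ 2 - C x * X + C c) (by simp [hdeg])
  simp only [IsRoot.def, eval_add, eval_sub, eval_mul, eval_pow, eval_X, eval_C] at hy
  have hy0 : y ≠ 0 := by
    rintro rfl
    exact hc (by simpa using hy)
  refine ⟨y, hy0, ?_⟩
  field_simp
  linear_combination -hy

variable {K L : Type*} [Field K] [Field L] [Algebra K L]

lemma algebraMap_eval_dickson (j : ℕ) (a x : K) (k : ℕ) :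
    algebraMap K L ((dickson j a k).eval x) =
      (dickson j (algebraMap K L a) k).eval (algebraMap K L x) := by
  rw [← map_dickson, eval_map_apply]

lemma eq_or_mul_eq_of_injective_eval_dickson {a : K} {k : ℕ}
    (hinj : Function.Injective fun x => (dickson 1 a k).eval x) {y z : L} (hy : y ≠ 0)
    (hz : z ≠ 0) (hyK : y + algebraMap K L a / y ∈ Set.range (algebraMap K L))
    (hzK : z + algebraMap K L a / z ∈ Set.range (algebraMap K L)) (hyz : y ^ k = z ^ k) :
    y = z ∨ y * z = algebraMap K L a := by
  obtain ⟨u, hu⟩ := hyK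
  obtain ⟨v, hv⟩ := hzK
  have huv : u = v := hinj <| (algebraMap K L).injective <| by
    rw [algebraMap_eval_dickson, algebraMap_eval_dickson, hu, hv,
      eval_dickson_one_add_div _ hy, eval_dickson_one_add_div _ hz, hyz]
  rw [← add_div_eq_add_div_iff hy hz, ← hu, ← hv, huv]

-- The points `y` and `ζ * y` of the orbit may satisfy `y * (ζ * y) = a` and then give the same `x`;
-- since `ζ ^ 2 ≠ 1`, this cannot also happen for the next pair.
lemma not_injective_eval_dickson_of_orbit {a : K} {ζ y : L} {k m : ℕ}
    (hζ : IsPrimitiveRoot ζ m) (hm : 2 < m) (hmk : m ∣ k) (hy : y ≠ 0)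
    (horbit : ∀ i : ℕ, ζ ^ i * y + algebraMap K L a / (ζ ^ i * y) ∈ Set.range (algebraMap K L)) :
    ¬ Function.Injective fun x => (dickson 1 a k).eval x := by
  intro hinj
  have hζ0 : ζ ≠ 0 := hζ.ne_zero (by omega)
  have hζk : ζ ^ k = 1 := (hζ.pow_eq_one_iff_dvd k).2 hmk
  have hzy (i : ℕ) : ζ ^ i * y ≠ 0 := mul_ne_zero (pow_ne_zero i hζ0) hy
  have hcons (i : ℕ) : (ζ ^ i * y) * (ζ ^ (i + 1) * y) = algebraMap K L a := by
    refine (eq_or_mul_eq_of_injective_eval_dickson hinj (hzy i) (hzy (i + 1)) (horbit i)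
      (horbit (i + 1)) ?_).resolve_left fun h => ?_
    · rw [pow_succ, mul_right_comm, mul_pow _ ζ, hζk, mul_one]
    · rw [pow_succ, mul_right_comm] at h
      exact hζ.ne_one (by omega) (mul_left_cancel₀ (hzy i) (by rw [← h, mul_one]))
  refine hζ.pow_ne_one_of_pos_of_lt two_ne_zero hm ?_
  refine mul_left_cancel₀ (mul_ne_zero (hzy 0) (hzy 1)) ?_
  rw [mul_one]
  linear_combination hcons 1 - hcons 0

variable [Fintype K]

local notation "q" => Fintype.card K

variable (K) in
lemma mem_range_algebraMap_iff_pow_card_eq_self {x : L} :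
    x ∈ Set.range (algebraMap K L) ↔ x ^ q = x := by
  refine ⟨?_, fun hx => ?_⟩
  · rintro ⟨c, rfl⟩
    rw [← map_pow, FiniteField.pow_card]
  · have hsplit : (X ^ q - X : K[X]).Splits := by
      simpa using (FiniteField.isSplittingField_sub K K).splits
    have hroot : x ∈ ((X ^ q - X : K[X]).map (algebraMap K L)).roots := by
      have hne := FiniteField.X_pow_card_sub_X_ne_zero L (Fintype.one_lt_card (α := K))
      simpa [hne, sub_eq_zero] using hx
    rw [hsplit.roots_map_of_injective (algebraMap K L).injective,
      FiniteField.roots_X_pow_card_sub_X] at hroot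
    simpa using hroot

lemma add_div_mem_range_algebraMap_iff {a : K} {y : L} (hy : y ≠ 0) :
    y + algebraMap K L a / y ∈ Set.range (algebraMap K L) ↔
      y ^ q = y ∨ y ^ (q + 1) = algebraMap K L a := by
  have hfrob : (y + algebraMap K L a / y) ^ q = y ^ q + algebraMap K L a / y ^ q := by
    have hadd := map_add (FiniteField.frobeniusAlgHom K L) y (algebraMap K L a / y)
    rwa [map_div₀, AlgHom.commutes, FiniteField.coe_frobeniusAlgHom] at hadd
  rw [mem_range_algebraMap_iff_pow_card_eq_self K, hfrob,
    add_div_eq_add_div_iff (pow_ne_zero _ hy) hy, ← pow_succ]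

lemma pow_card_sq_sub_one_eq_one {a : K} (ha : a ≠ 0) {y : L} (hy : y ≠ 0)
    (h : y ^ q = y ∨ y ^ (q + 1) = algebraMap K L a) : y ^ (q ^ 2 - 1) = 1 := by
  have hsub (h : y ^ q = y) : y ^ (q - 1) = 1 := by
    rw [pow_sub₀ y hy Fintype.card_pos, h, pow_one, mul_inv_cancel₀ hy]
  rw [sq_sub_one_eq_mul]
  rcases h with h | h
  · rw [mul_comm, pow_mul, hsub h, one_pow]
  · rw [pow_mul, h, ← map_pow, FiniteField.pow_card_sub_one_eq_one a ha, map_one]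

lemma exists_algebraMap_eq_add_div [IsAlgClosed L] {a : K} (ha : a ≠ 0) (x : K) :
    ∃ y : L, y ≠ 0 ∧ y ^ (q ^ 2 - 1) = 1 ∧ algebraMap K L x = y + algebraMap K L a / y := by
  obtain ⟨y, hy, hxy⟩ :=
    exists_eq_add_div ((map_ne_zero (algebraMap K L)).2 ha) (algebraMap K L x)
  have hy' := (add_div_mem_range_algebraMap_iff hy).1 ⟨x, hxy⟩
  exact ⟨y, hy, pow_card_sq_sub_one_eq_one ha hy hy', hxy⟩

variable (L) in
lemma algebraMap_pow_card_sq_sub_one_eq_one {a : K} (ha : a ≠ 0) :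
    algebraMap K L a ^ (q ^ 2 - 1) = 1 :=
  pow_card_sq_sub_one_eq_one ha ((_root_.map_ne_zero _).2 ha)
    (.inl (by rw [← map_pow, FiniteField.pow_card]))

lemma injective_eval_dickson_of_coprime {a : K} (ha : a ≠ 0) {k : ℕ}
    (hk : k.Coprime (q ^ 2 - 1)) : Function.Injective fun x => (dickson 1 a k).eval x := by
  let L := AlgebraicClosure K
  set A := algebraMap K L a
  have hA : A ≠ 0 := (map_ne_zero (algebraMap K L)).2 ha
  have hA1 : A ^ (q ^ 2 - 1) = 1 := algebraMap_pow_card_sq_sub_one_eq_one L ha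
  intro x₁ x₂ h
  obtain ⟨y, hy, hy1, hxy⟩ := exists_algebraMap_eq_add_div (L := L) ha x₁
  obtain ⟨z, hz, hz1, hxz⟩ := exists_algebraMap_eq_add_div (L := L) ha x₂
  have hpow : y ^ k + A ^ k / y ^ k = z ^ k + A ^ k / z ^ k := by
    rw [← eval_dickson_one_add_div A hy, ← eval_dickson_one_add_div A hz, ← hxy, ← hxz,
      ← algebraMap_eval_dickson, ← algebraMap_eval_dickson]
    exact congrArg (algebraMap K L) h
  refine (algebraMap K L).injective ?_
  rw [hxy, hxz, add_div_eq_add_div_iff hy hz]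
  refine ((add_div_eq_add_div_iff (pow_ne_zero k hy) (pow_ne_zero k hz)).1 hpow).imp
    (fun h => ?_) fun h => ?_
  · exact eq_of_pow_eq_pow_of_coprime hz hk h (hy1.trans hz1.symm)
  · exact eq_of_pow_eq_pow_of_coprime hA hk (by rw [mul_pow, h])
      (by rw [mul_pow, hy1, hz1, hA1, one_mul])

lemma derivative_eval_dickson_ne_zero_of_coprime {a : K} (ha : a ≠ 0) {k : ℕ}
    (hk : k.Coprime (q ^ 2 - 1)) (hkK : (k : K) ≠ 0) (x : K) :
    (derivative (dickson 1 a k)).eval x ≠ 0 := by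
  obtain _ | k := k
  · exact absurd Nat.cast_zero hkK
  let L := AlgebraicClosure K
  set A := algebraMap K L a
  have hA : A ≠ 0 := (map_ne_zero (algebraMap K L)).2 ha
  have hA1 : A ^ (q ^ 2 - 1) = 1 := algebraMap_pow_card_sq_sub_one_eq_one L ha
  obtain ⟨y, hy, hy1, hxy⟩ := exists_algebraMap_eq_add_div (L := L) ha x
  have hz : A / y ≠ 0 := div_ne_zero hA hy
  have hz1 : (A / y) ^ (q ^ 2 - 1) = 1 := by rw [div_pow, hA1, hy1, div_one]
  intro h
  have hsum : ∑ i ∈ Finset.range (k + 1), y ^ i * (A / y) ^ (k - i) = 0 := by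
    rw [derivative_dickson_one, eval_mul] at h
    have hU : (dickson 2 a k).eval x = 0 := by
      refine (mul_eq_zero.1 h).resolve_left ?_
      simpa using hkK
    rw [← eval_dickson_two_add, mul_div_cancel₀ A hy, ← hxy, ← algebraMap_eval_dickson, hU,
      map_zero]
  have hpow : y ^ (k + 1) = (A / y) ^ (k + 1) := by
    rw [← sub_eq_zero, ← geom_sum₂_mul, Nat.add_sub_cancel, hsum, zero_mul]
  rw [← eq_of_pow_eq_pow_of_coprime hz hk hpow (hy1.trans hz1.symm)] at hsum
  have hself := geom_sum₂_self y (k + 1)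
  rw [Nat.add_sub_cancel, hsum] at hself
  refine mul_ne_zero ?_ (pow_ne_zero k hy) hself.symm
  rwa [← map_natCast (algebraMap K L), _root_.map_ne_zero]

lemma exists_orbit_subset_range_algebraMap [IsAlgClosed L] {a : K} (ha : a ≠ 0) {ζ : L}
    (hζ0 : ζ ≠ 0) (hζ : ζ ^ (q + 1) = 1 ∨ ζ ^ (q - 1) = 1) :
    ∃ y ≠ 0, ∀ i : ℕ,
      ζ ^ i * y + algebraMap K L a / (ζ ^ i * y) ∈ Set.range (algebraMap K L) := by
  suffices ∃ y ≠ 0, ∀ i : ℕ,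
      (ζ ^ i * y) ^ q = ζ ^ i * y ∨ (ζ ^ i * y) ^ (q + 1) = algebraMap K L a by
    obtain ⟨y, hy, horbit⟩ := this
    exact ⟨y, hy, fun i => (add_div_mem_range_algebraMap_iff
      (mul_ne_zero (pow_ne_zero i hζ0) hy)).2 (horbit i)⟩
  rcases hζ with hζ | hζ
  · obtain ⟨y, hy⟩ := IsAlgClosed.exists_pow_nat_eq (algebraMap K L a) (Nat.succ_pos q)
    refine ⟨y, ?_, fun i => .inr ?_⟩
    · rintro rfl
      rw [zero_pow (Nat.succ_ne_zero q), eq_comm, map_eq_zero] at hy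
      exact ha hy
    · rw [mul_pow, pow_right_comm, hζ, one_pow, one_mul, hy]
  · refine ⟨1, one_ne_zero, fun i => .inl ?_⟩
    have hζq : ζ ^ q = ζ := by
      rw [← Nat.sub_add_cancel (Fintype.card_pos (α := K)), pow_succ, hζ, one_mul]
    rw [mul_one, pow_right_comm, hζq]

lemma natCast_ne_zero_of_dvd_card_sq_sub_one {m : ℕ} (hm : m ∣ q ^ 2 - 1) : (m : K) ≠ 0 := by
  intro h
  obtain ⟨d, hd⟩ := hm
  have hcast := congrArg (Nat.cast : ℕ → K) hd
  rw [Nat.cast_sub (Nat.one_le_pow _ _ Fintype.card_pos)] at hcast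
  simp [h] at hcast

theorem coprime_of_injective_eval_dickson {a : K} (ha : a ≠ 0) {k : ℕ}
    (hinj : Function.Injective fun x => (dickson 1 a k).eval x) : k.Coprime (q ^ 2 - 1) := by
  by_contra hk
  obtain ⟨ℓ, hℓ, hℓk, hℓq⟩ := Nat.Prime.not_coprime_iff_dvd.1 hk
  have hℓK : (ℓ : K) ≠ 0 := natCast_ne_zero_of_dvd_card_sq_sub_one hℓq
  obtain rfl | hℓ2 := eq_or_ne ℓ 2
  · have hneg : (-1 : K) = 1 :=
      hinj (by simp [eval_neg_dickson_one, (even_iff_two_dvd.2 hℓk).neg_one_pow])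
    refine hℓK ?_
    push_cast
    linear_combination -hneg
  · let L := AlgebraicClosure K
    have : NeZero (ℓ : L) := ⟨by rwa [← map_natCast (algebraMap K L), _root_.map_ne_zero]⟩
    obtain ⟨ζ, hζ⟩ := HasEnoughRootsOfUnity.exists_primitiveRoot L ℓ
    rw [sq_sub_one_eq_mul, hℓ.dvd_mul, ← hζ.pow_eq_one_iff_dvd, ← hζ.pow_eq_one_iff_dvd] at hℓq
    obtain ⟨y, hy, horbit⟩ :=
      exists_orbit_subset_range_algebraMap ha (hζ.ne_zero hℓ.ne_zero) hℓq
    exact not_injective_eval_dickson_of_orbit hζ (hℓ.two_le.lt_of_ne' hℓ2) hℓk hy horbit hinj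

theorem isPermPoly_dickson_iff_of_field {a : K} (ha : a ≠ 0) (k : ℕ) :
    IsPermPoly (dickson 1 a k) ↔ k.Coprime (q ^ 2 - 1) :=
  Finite.injective_iff_bijective.symm.trans
    ⟨coprime_of_injective_eval_dickson ha, injective_eval_dickson_of_coprime ha⟩

end FiniteFields

section PrimePowers

theorem isPermPoly_dickson_iff_of_isLocalHom {R K : Type*} [CommRing R] [Finite R] [Field K]
    [Fintype K] (φ : R →+* K) [IsLocalHom φ] (hφ : Function.Surjective φ) {a : R}
    (ha : IsUnit a) (k : ℕ) :
    IsPermPoly (dickson 1 a k) ↔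
      k.Coprime (Fintype.card K ^ 2 - 1) ∧ (¬ Function.Injective φ → (k : K) ≠ 0) := by
  have ha' : φ a ≠ 0 := (ha.map φ).ne_zero
  by_cases hinj : Function.Injective φ
  · let σ : R ≃+* K := RingEquiv.ofBijective φ ⟨hinj, hφ⟩
    have hσ : (σ : R →+* K) = φ := rfl
    rw [← isPermPoly_map_equiv_iff σ, hσ, map_dickson, isPermPoly_dickson_iff_of_field ha',
      and_iff_left (absurd hinj)]
  · rw [isPermPoly_iff_of_isLocalHom φ hφ hinj, map_dickson, isPermPoly_dickson_iff_of_field ha']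
    refine and_congr_right fun hk => ⟨fun hder _ hkK => hder 0 ?_, fun hkK x => ?_⟩
    · obtain _ | k := k
      · simp
      · rw [Nat.cast_succ] at hkK
        rw [derivative_dickson_one, eval_mul]
        simp [hkK]
    · exact derivative_eval_dickson_ne_zero_of_coprime ha' hk (hkK hinj) x

lemma isLocalHom_castHom_pow (p : ℕ) {m : ℕ} (hm : m ≠ 0) :
    IsLocalHom (ZMod.castHom (dvd_pow_self p hm) (ZMod p)) := by
  refine ⟨fun x hx => ?_⟩
  obtain ⟨x, rfl⟩ := ZMod.intCast_surjective x
  rw [map_intCast, ZMod.coe_int_isUnit_iff_isCoprime] at hx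
  rw [ZMod.coe_int_isUnit_iff_isCoprime, Nat.cast_pow]
  exact hx.pow_left

lemma injective_castHom_zmod_iff {m n : ℕ} (h : m ∣ n) :
    Function.Injective (ZMod.castHom h (ZMod m)) ↔ n = m := by
  refine ⟨fun hinj => ?_, ?_⟩
  · simpa only [Nat.card_zmod] using
      Nat.card_eq_of_bijective _ ⟨hinj, ZMod.castHom_surjective h⟩
  · rintro rfl
    exact ZMod.castHom_injective (ZMod n)

theorem isPermPoly_dickson_zmod_prime_pow_iff {p m : ℕ} (hp : p.Prime) (hm : m ≠ 0)
    {a : ZMod (p ^ m)} (ha : IsUnit a) (k : ℕ) :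
    IsPermPoly (dickson 1 a k) ↔ k.Coprime (p ^ (m - 1) * (p ^ 2 - 1)) := by
  have : Fact p.Prime := ⟨hp⟩
  have := isLocalHom_castHom_pow p hm
  have hpow : k.Coprime (p ^ (m - 1)) ↔ (¬ m = 1 → (k : ZMod p) ≠ 0) := by
    rw [Ne, ZMod.natCast_eq_zero_iff, ← hp.coprime_iff_not_dvd, Nat.coprime_comm]
    obtain rfl | hm1 := eq_or_ne m 1
    · simp
    · rw [Nat.coprime_pow_left_iff (by omega), forall_prop_of_true hm1]
  rw [isPermPoly_dickson_iff_of_isLocalHom _ (ZMod.castHom_surjective (dvd_pow_self p hm)) ha,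
    ZMod.card, injective_castHom_zmod_iff, Nat.pow_eq_self_iff hp.one_lt,
    Nat.coprime_mul_iff_right, hpow, and_comm]

theorem isPermPoly_dickson_zmod_prod_prime_pow_iff {ι : Type*} [Fintype ι] {p m : ι → ℕ}
    (hp : ∀ i, (p i).Prime) (hinj : Function.Injective p) (hm : ∀ i, m i ≠ 0)
    {a : ZMod (∏ i, p i ^ m i)} (ha : IsUnit a) (k : ℕ) :
    IsPermPoly (dickson 1 a k) ↔ ∀ i, k.Coprime (p i ^ (m i - 1) * (p i ^ 2 - 1)) := by
  have hcop : Pairwise (Function.onFun Nat.Coprime fun i => p i ^ m i) := fun i j hij =>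
    Nat.coprime_pow_primes _ _ (hp i) (hp j) (hinj.ne hij)
  rw [isPermPoly_zmod_prod_iff hcop]
  refine forall_congr' fun i => ?_
  rw [map_dickson, isPermPoly_dickson_zmod_prime_pow_iff (hp i) (hm i) (ha.map _)]

end PrimePowers

section CoprimeToW

lemma coprime_lcm_right_iff {k m n : ℕ} :
    k.Coprime (Nat.lcm m n) ↔ k.Coprime m ∧ k.Coprime n :=
  ⟨fun h => ⟨h.of_dvd_right (Nat.dvd_lcm_left m n), h.of_dvd_right (Nat.dvd_lcm_right m n)⟩,
    fun h => (h.1.mul_right h.2).of_dvd_right (Nat.lcm_dvd_mul m n)⟩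

lemma coprime_finset_lcm_iff {ι : Type*} {k : ℕ} {s : Finset ι} {l : ι → ℕ} :
    k.Coprime (s.lcm l) ↔ ∀ i ∈ s, k.Coprime (l i) :=
  ⟨fun h _ hi => h.of_dvd_right (Finset.dvd_lcm hi), fun h =>
    (Nat.Coprime.prod_right h).of_dvd_right
      (Finset.lcm_dvd fun _ hi => Finset.dvd_prod_of_mem l hi)⟩

lemma coprime_div_two_iff {k n : ℕ} (hn : 4 ∣ n) : k.Coprime (n / 2) ↔ k.Coprime n := by
  obtain ⟨m, rfl⟩ := hn
  rw [show 4 * m / 2 = 2 * m by omega, show 4 * m = 2 * (2 * m) by ring]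
  simp only [Nat.coprime_mul_iff_right, and_self_left]

lemma coprime_mul_sq_sub_one_div_two_iff {k c p : ℕ} (hp : Odd p) :
    k.Coprime (c * ((p ^ 2 - 1) / 2)) ↔ k.Coprime (c * (p ^ 2 - 1)) := by
  have hdvd : 4 ∣ p ^ 2 - 1 := dvd_trans (by norm_num) (Nat.eight_dvd_sq_sub_one_of_odd hp)
  rw [Nat.coprime_mul_iff_right, coprime_div_two_iff hdvd, ← Nat.coprime_mul_iff_right]

lemma coprime_three_mul_two_pow_iff {k e : ℕ} :
    k.Coprime (if e < 3 then 3 * 2 ^ (e - 1) else 3 * 2 ^ (e - 2)) ↔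
      k.Coprime (2 ^ (e - 1) * (2 ^ 2 - 1)) := by
  rw [mul_comm _ (2 ^ 2 - 1), show 2 ^ 2 - 1 = 3 by norm_num]
  split_ifs with he
  · rfl
  · rw [Nat.coprime_mul_iff_right, Nat.coprime_mul_iff_right,
      Nat.coprime_pow_right_iff (by omega), Nat.coprime_pow_right_iff (by omega)]

end CoprimeToW

theorem dickson_permutation_iff_gcd_w
    (e r : ℕ) (p ee : Fin r → ℕ)
    (hp : ∀ i, Nat.Prime (p i)) (hodd : ∀ i, Odd (p i)) (hmono : StrictMono p)
    (hee : ∀ i, 1 ≤ ee i)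
    (n : ℕ) (hn : n = 2 ^ e * ∏ i, p i ^ ee i)
    (l : Fin r → ℕ) (hl : ∀ i, l i = p i ^ (ee i - 1) * ((p i ^ 2 - 1) / 2))
    (l0 : ℕ) (hl0 : l0 = if e < 3 then 3 * 2 ^ (e - 1) else 3 * 2 ^ (e - 2))
    (w : ℕ) (hw : w = if e = 0 then Finset.univ.lcm l else Nat.lcm l0 (Finset.univ.lcm l))
    (k : ℕ) (hk : 0 < k) (a : ZMod n) (ha : IsUnit a) :
    Function.Bijective (fun u : ZMod n => Polynomial.eval u (Polynomial.dickson 1 a k)) ↔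
      Nat.gcd k w = 1 := by
  subst hn
  have hcop : (2 ^ e).Coprime (∏ i, p i ^ ee i) := Nat.Coprime.prod_right fun i _ =>
    (Nat.coprime_two_left.2 (hodd i)).pow _ _
  have hlcm : k.Coprime (Finset.univ.lcm l) ↔
      ∀ i, k.Coprime (p i ^ (ee i - 1) * (p i ^ 2 - 1)) := by
    simp only [coprime_finset_lcm_iff, Finset.mem_univ, true_imp_iff, hl,
      coprime_mul_sq_sub_one_div_two_iff (hodd _)]
  change IsPermPoly (dickson 1 a k) ↔ k.Coprime w
  rw [isPermPoly_zmod_mul_iff hcop, map_dickson, map_dickson,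
    isPermPoly_dickson_zmod_prod_prime_pow_iff hp hmono.injective
      (fun i => Nat.one_le_iff_ne_zero.1 (hee i)) (ha.map _), ← hlcm, hw]
  obtain rfl | he := eq_or_ne e 0
  · have : Subsingleton (ZMod (2 ^ 0)) := inferInstanceAs (Subsingleton (ZMod 1))
    rw [if_pos rfl, and_iff_right (isPermPoly_of_subsingleton _)]
  · rw [if_neg he, coprime_lcm_right_iff, hl0, coprime_three_mul_two_pow_iff,
      isPermPoly_dickson_zmod_prime_pow_iff Nat.prime_two he (ha.map _)]
end

section
/- Let p ≥ 5 be a prime, let e ≥ 1 be an integer, and let k be a positive integer with gcd(k, p^{e−1}·((p² − 1)/2)) = 1. If e = 1, then D_k(u, 1) = u for all u ∈ ℤ/pℤ if and only if k ≡ 1, −1, p, or −p (mod (p² − 1)/2). If e > 1, then D_k(u, 1) = u for all u ∈ ℤ/p^eℤ if and only if k ≡ 1 or −1 (mod p^{e−1}·((p² − 1)/2)). -/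
/-!
With `u = x + x⁻¹` one has `D_k(u, 1) = x ^ k + x⁻ᵏ`, and
`x ^ k * (D_k(u, 1) - D_l(u, 1)) = (x ^ k - x ^ l) * (x ^ k - x⁻ˡ)`,
so that, whenever the two factors cannot both be non-units, agreement of `D_k` and `D_l` at `u`
is a congruence `k ≡ ±l` modulo the order of `x`.

Necessity: let `x` be a generator of `(ℤ/p^e)ˣ`, of order `p^(e-1) * (p - 1)`, and an element of
order `p + 1` in the field with `p ^ 2` elements; the least common multiple of the two orders is
`p^(e-1) * ((p ^ 2 - 1) / 2)`. For `e = 1` the two signs are independent, whence the four classes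
`±1, ±p`. For `e > 1`, `D_k(u, 1) ≡ u` modulo `p ^ 2` forces the derivative of `D_k` to be `1`
modulo `p`; at the element of order `p + 1` this gives `k ≡ ±1` modulo `p` with the sign found
modulo `p + 1`, and the sign modulo `p^(e-1) * (p - 1)` is visible modulo `p` too, so the two agree.

Sufficiency: adjoin to `ℤ/p^e` a root `x` of `X ^ 2 - u * X + 1`. If `u ^ 2 - 4` is a unit, the
factorisation for `D_p(u, 1) ≡ u` modulo `p` shows that `x ^ ((p ^ 2 - 1) / 2) ≡ 1` modulo `p`, and
raising to the power `p^(e-1)` lifts this to `p^e`. Otherwise `p` divides `u ^ 2 - 4`, hence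
`(x ^ 2 - 1) ^ 2`, and neither factor `x ^ k - x ^ l`, `x ^ k - x⁻ˡ` need vanish, but their product
is a multiple of `(x ^ 2 - 1) * (x ^ (2 * p^(e-1)) - 1) = 0`.
-/

open Polynomial

theorem modEq_natCast_lcm {a b : ℤ} {m n : ℕ} (hm : a ≡ b [ZMOD m]) (hn : a ≡ b [ZMOD n]) :
    a ≡ b [ZMOD m.lcm n] :=
  Int.modEq_and_modEq_iff_modEq_lcm.mp ⟨hm, hn⟩

theorem lcm_pow_mul_sub_one_add_one {p : ℕ} (hp : Odd p) (j : ℕ) :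
    Nat.lcm (p ^ j * (p - 1)) (p + 1) = p ^ j * ((p ^ 2 - 1) / 2) := by
  have hcoprime : Nat.Coprime (p ^ j) (p + 1) := Nat.Coprime.pow_left j (by simp)
  obtain ⟨r, rfl⟩ := hp
  have hgcd : Nat.gcd ((2 * r + 1) ^ j * (2 * r + 1 - 1)) (2 * r + 1 + 1) = 2 := by
    rw [hcoprime.gcd_mul_left_cancel, Nat.add_sub_cancel,
      show 2 * r + 1 + 1 = 2 + 2 * r by ring, Nat.gcd_add_self_right]
    simp
  have hsq : (2 * r + 1) ^ 2 - 1 = 2 * (2 * r * (r + 1)) := by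
    rw [Nat.sub_eq_iff_eq_add (Nat.one_le_pow _ _ (by omega))]; ring
  rw [Nat.lcm, hgcd, hsq, Nat.mul_div_cancel_left _ two_pos]
  apply Nat.div_eq_of_eq_mul_left two_pos
  rw [Nat.add_sub_cancel]
  ring

/-! ### Dickson polynomials at `x + x⁻¹` -/

section CommRing

variable {R : Type*} [CommRing R]

theorem map_eval_dickson_one_one {S : Type*} [CommRing S] (f : R →+* S) (k : ℕ) (u : R) :
    f ((dickson 1 1 k).eval u) = (dickson 1 1 k).eval (f u) := by
  rw [← eval_map_apply, map_dickson, map_one]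

theorem map_eval_derivative_dickson_one_one {S : Type*} [CommRing S] (f : R →+* S) (k : ℕ)
    (u : R) :
    f ((derivative (dickson 1 1 k)).eval u) = (derivative (dickson 1 1 k)).eval (f u) := by
  rw [← eval_map_apply, ← derivative_map, map_dickson, map_one]

theorem eval_dickson_one_one_val_add_val_inv (x : Rˣ) (k : ℕ) :
    (dickson 1 1 k).eval (x + ↑x⁻¹ : R) = ↑(x ^ (k : ℤ)) + ↑(x ^ (-k : ℤ)) := by
  simp [dickson_one_one_eval_add_inv]

theorem zpow_mul_eval_dickson_one_one_sub (x : Rˣ) (k l : ℕ) :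
    ↑(x ^ (k : ℤ)) * ((dickson 1 1 k).eval (x + ↑x⁻¹ : R) - (dickson 1 1 l).eval (x + ↑x⁻¹ : R)) =
      (↑(x ^ (k : ℤ)) - ↑(x ^ (l : ℤ))) * (↑(x ^ (k : ℤ)) - ↑(x ^ (-l : ℤ))) := by
  simp only [eval_dickson_one_one_val_add_val_inv, zpow_neg]
  linear_combination (x ^ (k : ℤ)).mul_inv - (x ^ (l : ℤ)).mul_inv

theorem sq_sub_one_sq_eq (x : Rˣ) :
    ((x : R) ^ 2 - 1) ^ 2 = (x : R) ^ 2 * ((x + ↑x⁻¹ : R) ^ 2 - 4) := by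
  linear_combination (-(x : R) * ↑x⁻¹ - 2 * (x : R) ^ 2 + -1) * x.mul_inv

theorem pow_sub_one_dvd_zpow_sub_zpow (x : Rˣ) {n : ℕ} {a b : ℤ} (h : a ≡ b [ZMOD n]) :
    (x : R) ^ n - 1 ∣ ↑(x ^ a) - ↑(x ^ b) := by
  wlog hab : b ≤ a generalizing a b
  · rw [dvd_sub_comm]
    exact this h.symm (by omega)
  obtain ⟨d, hd⟩ := Int.le.dest hab
  have hnd : n ∣ d := by
    rw [← Int.natCast_dvd_natCast, ← add_sub_cancel_left b (d : ℤ), hd]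
    exact h.symm.dvd
  have hfactor : (↑(x ^ a) - ↑(x ^ b) : R) = ↑(x ^ b) * ((x : R) ^ d - 1) := by
    rw [← hd, zpow_add, zpow_natCast]
    push_cast
    ring
  exact hfactor ▸ (dvd_pow_sub_one_of_dvd hnd).mul_left _

theorem dvd_pow_sub_one_of_dvd_eval_dickson_one_one_sub {n : ℕ} (hn : Odd n) {d : R} {x : Rˣ}
    (hx : IsUnit ((x : R) ^ 2 - 1)) (h : d ∣ (dickson 1 1 n).eval (x + ↑x⁻¹ : R) - (x + ↑x⁻¹)) :
    d ∣ (x : R) ^ ((n ^ 2 - 1) / 2) - 1 := by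
  have hlcm : Nat.lcm (n - 1) (n + 1) = (n ^ 2 - 1) / 2 := by
    simpa using lcm_pow_mul_sub_one_add_one hn 0
  obtain ⟨r, rfl⟩ := hn
  have hfactor := zpow_mul_eval_dickson_one_one_sub x (2 * r + 1) 1
  simp only [zpow_natCast, zpow_neg, pow_one, dickson_one, eval_X, Units.val_pow_eq_pow_val]
    at hfactor
  have hdvd : d ∣ ((x : R) ^ (2 * r) - 1) * ((x : R) ^ (2 * r + 2) - 1) := by
    convert h.mul_left ((x : R) ^ (2 * r + 1)) using 1
    rw [hfactor]
    linear_combination ((x : R) ^ (2 * r) - 1) * x.mul_inv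
  have hcoprime : IsCoprime ((x : R) ^ (2 * r) - 1) ((x : R) ^ (2 * r + 2) - 1) := by
    obtain ⟨c, hc⟩ := (((x ^ (2 * r)).isUnit).mul hx).exists_left_inv
    refine ⟨-c, c, ?_⟩
    rw [← hc, Units.val_pow_eq_pow_val]
    ring
  exact hdvd.trans <| hcoprime.mul_dvd (dvd_pow_sub_one_of_dvd (hlcm ▸ Nat.dvd_lcm_left _ _))
    (dvd_pow_sub_one_of_dvd (hlcm ▸ Nat.dvd_lcm_right _ _))

theorem natCast_mul_sub_one_dvd_pow_sub_one {p : ℕ} (hp : p.Prime) (hp2 : p ≠ 2) {w : R}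
    (h : (p : R) ∣ (w - 1) ^ 2) : (p : R) * (w - 1) ∣ w ^ p - 1 := by
  obtain ⟨r, hr⟩ := exists_add_pow_prime_eq hp (w - 1) 1
  have hw : w ^ p - 1 = (w - 1) ^ p + p * (w - 1) * r := by
    rw [sub_add_cancel] at hr
    linear_combination hr
  have hp3 : p = 2 + (p - 3) + 1 := by have := hp.two_le; omega
  rw [hw, hp3, pow_succ, pow_add, ← hp3]
  exact (mul_dvd_mul_right (h.mul_right _) _).add (dvd_mul_right _ _)

theorem natCast_pow_mul_sub_one_dvd_pow_sub_one {p : ℕ} (hp : p.Prime) (hp2 : p ≠ 2) {z : R}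
    (h : (p : R) ∣ (z - 1) ^ 2) (j : ℕ) : (p : R) ^ j * (z - 1) ∣ z ^ p ^ j - 1 := by
  induction j with
  | zero => simp
  | succ j ih =>
    have hj : (p : R) ∣ (z ^ p ^ j - 1) ^ 2 :=
      h.trans (pow_dvd_pow_of_dvd (sub_one_dvd_pow_sub_one z _) 2)
    calc (p : R) ^ (j + 1) * (z - 1) = p * (p ^ j * (z - 1)) := by ring
      _ ∣ p * (z ^ p ^ j - 1) := mul_dvd_mul_left _ ih
      _ ∣ z ^ p ^ (j + 1) - 1 := by
        rw [pow_succ p, pow_mul]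
        exact natCast_mul_sub_one_dvd_pow_sub_one hp hp2 hj

theorem natCast_pow_dvd_sub_one_mul_pow_sub_one {p : ℕ} (hp : p.Prime) (hp2 : p ≠ 2) {z : R}
    (h : (p : R) ∣ (z - 1) ^ 2) (j : ℕ) : (p : R) ^ (j + 1) ∣ (z - 1) * (z ^ p ^ j - 1) :=
  calc (p : R) ^ (j + 1) ∣ p ^ j * (z - 1) ^ 2 := pow_succ (p : R) j ▸ mul_dvd_mul_left _ h
    _ = (z - 1) * (p ^ j * (z - 1)) := by ring
    _ ∣ (z - 1) * (z ^ p ^ j - 1) :=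
      mul_dvd_mul_left _ (natCast_pow_mul_sub_one_dvd_pow_sub_one hp hp2 h j)

theorem sub_inv_mul_eval_derivative_dickson_one_one (x : Rˣ) (k : ℕ) :
    (x - ↑x⁻¹ : R) * (derivative (dickson 1 1 k)).eval (x + ↑x⁻¹ : R) =
      k * (↑(x ^ (k : ℤ)) - ↑(x ^ (-k : ℤ))) := by
  induction k using Nat.twoStepInduction with
  | zero => norm_num
  | one => simp
  | more n ih₀ ih₁ =>
    simp only [zpow_neg, zpow_natCast, ← inv_pow, Units.val_pow_eq_pow_val] at ih₀ ih₁ ⊢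
    simp only [dickson_add_two, C_1, one_mul, derivative_sub, derivative_mul, derivative_X,
      eval_sub, eval_add, eval_mul, eval_X, dickson_one_one_eval_add_inv _ _ x.mul_inv]
    push_cast at ih₁ ⊢
    linear_combination (x + ↑x⁻¹ : R) * ih₁ - ih₀ +
      (n : R) * ((x : R) ^ n - (↑x⁻¹ : R) ^ n) * x.mul_inv

end CommRing

theorem exists_injective_units_add_inv.{u} {R : Type u} [CommRing R] (a : R) :
    ∃ (S : Type u) (_ : CommRing S) (f : R →+* S) (x : Sˣ), Function.Injective f ∧
      f a = x + ↑x⁻¹ := by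
  let x : (QuadraticAlgebra R (-1) a)ˣ :=
    ⟨⟨0, 1⟩, ⟨a, -1⟩,
      by ext <;> simp [QuadraticAlgebra.re_one, QuadraticAlgebra.im_one],
      by ext <;> simp [QuadraticAlgebra.re_one, QuadraticAlgebra.im_one]⟩
  exact ⟨_, inferInstance, algebraMap R (QuadraticAlgebra R (-1) a), x,
    QuadraticAlgebra.algebraMap_injective, by ext <;> simp [x]⟩

theorem modEq_or_modEq_neg_of_eval_dickson_one_one_eq {R : Type*} [CommRing R] [IsLocalRing R]
    {x : Rˣ} {k l : ℕ} (hx : IsUnit ((x : R) ^ (2 * l) - 1))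
    (h : (dickson 1 1 k).eval (x + ↑x⁻¹ : R) = (dickson 1 1 l).eval (x + ↑x⁻¹ : R)) :
    (k : ℤ) ≡ l [ZMOD orderOf x] ∨ (k : ℤ) ≡ -l [ZMOD orderOf x] := by
  have hprod := zpow_mul_eval_dickson_one_one_sub x k l
  rw [h, sub_self, mul_zero, eq_comm] at hprod
  have hdiff : (↑(x ^ (k : ℤ)) - ↑(x ^ (-l : ℤ)) : R) + -(↑(x ^ (k : ℤ)) - ↑(x ^ (l : ℤ))) =
      ↑(x ^ (-l : ℤ)) * ((x : R) ^ (2 * l) - 1) := by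
    rw [two_mul, pow_add, ← Units.val_pow_eq_pow_val, ← zpow_natCast, zpow_neg]
    linear_combination -(x ^ (l : ℤ) : Rˣ).val * (x ^ (l : ℤ)).inv_mul
  simp only [← zpow_eq_zpow_iff_modEq, Units.ext_iff]
  rcases IsLocalRing.isUnit_or_isUnit_of_isUnit_add
    (hdiff ▸ (x ^ (-l : ℤ)).isUnit.mul hx) with hunit | hunit
  · exact .inl (sub_eq_zero.mp (hunit.mul_left_eq_zero.mp hprod))
  · exact .inr (sub_eq_zero.mp (((IsUnit.neg_iff _).mp hunit).mul_right_eq_zero.mp hprod))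

theorem isUnit_pow_sub_one {K : Type*} [DivisionRing K] {x : Kˣ} {n : ℕ} (hx : x ^ n ≠ 1) :
    IsUnit ((x : K) ^ n - 1) := by
  rw [isUnit_iff_ne_zero, sub_ne_zero, ← Units.val_pow_eq_pow_val]
  exact Units.val_eq_one.not.mpr hx

theorem modEq_lcm_or_modEq_neg_lcm_of_eval_dickson_one_one_eq {K : Type*} [Field K] (p : ℕ)
    [CharP K p] {x : Kˣ} {k l : ℕ} (hx : x ^ (2 * l) ≠ 1)
    (h : (dickson 1 1 k).eval (x + ↑x⁻¹ : K) = (dickson 1 1 l).eval (x + ↑x⁻¹ : K))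
    (hderiv : (derivative (dickson 1 1 k)).eval (x + ↑x⁻¹ : K) =
      (derivative (dickson 1 1 l)).eval (x + ↑x⁻¹ : K)) :
    (k : ℤ) ≡ l [ZMOD p.lcm (orderOf x)] ∨ (k : ℤ) ≡ -l [ZMOD p.lcm (orderOf x)] := by
  have hsub : (↑(x ^ (l : ℤ)) - ↑(x ^ (-l : ℤ)) : K) ≠ 0 := by
    rw [sub_ne_zero, Ne, ← Units.ext_iff, zpow_neg, eq_inv_iff_mul_eq_one, ← zpow_add, ← two_mul]
    exact_mod_cast hx
  have hderiv' := congrArg ((x - ↑x⁻¹ : K) * ·) hderiv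
  simp only [sub_inv_mul_eval_derivative_dickson_one_one] at hderiv'
  rcases modEq_or_modEq_neg_of_eval_dickson_one_one_eq (isUnit_pow_sub_one hx) h with hk | hk
  · refine .inl (modEq_natCast_lcm ((CharP.intCast_eq_intCast K p).mp ?_) hk)
    apply mul_right_cancel₀ hsub
    simpa only [zpow_neg, zpow_eq_zpow_iff_modEq.mpr hk, Int.cast_natCast] using hderiv'
  · refine .inr (modEq_natCast_lcm ((CharP.intCast_eq_intCast K p).mp ?_) hk)
    apply mul_right_cancel₀ hsub
    simp only [zpow_neg, zpow_eq_zpow_iff_modEq.mpr hk, inv_inv, Int.cast_neg, Int.cast_natCast]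
      at hderiv' ⊢
    linear_combination -hderiv'

theorem dvd_eval_derivative_of_sq_dvd {R : Type*} [CommRing R] [IsDomain R] {d : R} (hd : d ≠ 0)
    (f : R[X]) (a : R) (h₀ : d ^ 2 ∣ f.eval a) (h₁ : d ^ 2 ∣ f.eval (a + d)) :
    d ∣ f.derivative.eval a := by
  obtain ⟨c, hc⟩ := f.binomExpansion a d
  have hlin : d * d ∣ d * f.derivative.eval a := by
    rw [← sq, show d * f.derivative.eval a = f.eval (a + d) - f.eval a - c * d ^ 2 by
      rw [hc]; ring]
    exact (h₁.sub h₀).sub (dvd_mul_left _ _)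
  exact (mul_dvd_mul_iff_left hd).mp hlin

/-! ### Periodicity in the index over `ℤ/p^e` -/

section ZMod

variable {p : ℕ}

theorem eval_dickson_one_one_char (hp : p.Prime) (u : ZMod p) : (dickson 1 1 p).eval u = u := by
  have := Fact.mk hp
  rw [dickson_one_one_zmod_p, eval_pow, eval_X, ZMod.pow_card]

theorem natCast_dvd_eval_dickson_one_one_sub (hp : p.Prime) (u : ℤ) :
    (p : ℤ) ∣ (dickson 1 1 p).eval u - u := by
  rw [← Int.modEq_iff_dvd, ← ZMod.intCast_eq_intCast_iff, ← eq_intCast (Int.castRingHom (ZMod p)),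
    ← eq_intCast (Int.castRingHom (ZMod p)), map_eval_dickson_one_one,
    eval_dickson_one_one_char hp]

theorem isUnit_or_natCast_dvd (hp : p.Prime) (j : ℕ) (a : ZMod (p ^ (j + 1))) :
    IsUnit a ∨ (p : ZMod (p ^ (j + 1))) ∣ a := by
  have : NeZero p := ⟨hp.ne_zero⟩
  obtain ⟨n, rfl⟩ := ZMod.natCast_zmod_surjective a
  rw [ZMod.isUnit_natCast_iff_not_dvd_pow hp j.succ_pos]
  exact (em' (p ∣ n)).imp_right fun h ↦ Nat.cast_dvd_cast h

theorem pow_sub_one_eq_zero_or_of_map_eq_add_inv {S : Type*} [CommRing S] (hp : p.Prime)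
    (hp2 : p ≠ 2) {j : ℕ} (f : ZMod (p ^ (j + 1)) →+* S) {u : ZMod (p ^ (j + 1))} {x : Sˣ}
    (hu : f u = x + ↑x⁻¹) :
    (x : S) ^ (p ^ j * ((p ^ 2 - 1) / 2)) - 1 = 0 ∨
      ((x : S) ^ 2 - 1) * ((x : S) ^ (2 * p ^ j) - 1) = 0 := by
  have hp0 : (p : S) ^ (j + 1) = 0 := by
    rw [← map_natCast f, ← map_pow, ← Nat.cast_pow, ZMod.natCast_self, map_zero]
  have hdisc : ((x : S) ^ 2 - 1) ^ 2 = (x : S) ^ 2 * f (u ^ 2 - 4) := by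
    rw [sq_sub_one_sq_eq, ← hu, map_sub, map_pow, map_ofNat]
  rcases isUnit_or_natCast_dvd hp j (u ^ 2 - 4) with hunit | hdvd
  · left
    have hx : IsUnit ((x : S) ^ 2 - 1) := by
      rw [← isUnit_pow_iff two_ne_zero, hdisc]
      exact (x.isUnit.pow 2).mul (hunit.map f)
    have hfrob : (p : S) ∣ (dickson 1 1 p).eval (x + ↑x⁻¹ : S) - (x + ↑x⁻¹ : S) := by
      obtain ⟨v, rfl⟩ := ZMod.intCast_surjective u
      have := map_dvd (Int.castRingHom S) (natCast_dvd_eval_dickson_one_one_sub hp v)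
      rw [map_sub, map_eval_dickson_one_one, map_natCast] at this
      simpa [← hu] using this
    have hbase := dvd_pow_sub_one_of_dvd_eval_dickson_one_one_sub (hp.odd_of_ne_two hp2) hx hfrob
    have hlift := dvd_sub_pow_of_dvd_sub hbase j
    rwa [hp0, zero_dvd_iff, one_pow, ← pow_mul, mul_comm] at hlift
  · right
    have hsq : (p : S) ∣ ((x : S) ^ 2 - 1) ^ 2 := by
      rw [hdisc, ← map_natCast f]
      exact (map_dvd f hdvd).mul_left _
    have hlift := natCast_pow_dvd_sub_one_mul_pow_sub_one hp hp2 hsq j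
    rwa [hp0, zero_dvd_iff, ← pow_mul] at hlift

theorem two_mul_pow_dvd_pow_mul (hp : Odd p) (j : ℕ) : 2 * p ^ j ∣ p ^ j * ((p ^ 2 - 1) / 2) := by
  rw [mul_comm]
  have := Nat.eight_dvd_sq_sub_one_of_odd hp
  exact mul_dvd_mul_left _ (by omega)

theorem zpow_sub_mul_zpow_sub_eq_zero {S : Type*} [CommRing S] (hp : p.Prime) (hp2 : p ≠ 2)
    {j : ℕ} (f : ZMod (p ^ (j + 1)) →+* S) {u : ZMod (p ^ (j + 1))} {x : Sˣ} (hu : f u = x + ↑x⁻¹)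
    {a b : ℤ} (hab : a ≡ b [ZMOD (p ^ j * ((p ^ 2 - 1) / 2) : ℕ)]) :
    (↑(x ^ a) - ↑(x ^ b) : S) * (↑(x ^ a) - ↑(x ^ (-b))) = 0 := by
  rcases pow_sub_one_eq_zero_or_of_map_eq_add_inv hp hp2 f hu with h | h
  · have hdvd := pow_sub_one_dvd_zpow_sub_zpow (R := S) x hab
    rw [h, zero_dvd_iff] at hdvd
    rw [hdvd, zero_mul]
  · have hab' : a ≡ b [ZMOD (2 * p ^ j : ℕ)] :=
      hab.of_dvd (mod_cast two_mul_pow_dvd_pow_mul (hp.odd_of_ne_two hp2) j)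
    have hneg : a ≡ -b [ZMOD (2 : ℕ)] :=
      (hab'.of_dvd (mod_cast Dvd.intro _ rfl)).trans
        (Int.modEq_iff_dvd.mpr ⟨-b, by push_cast; ring⟩)
    rw [mul_comm, ← zero_dvd_iff, ← h]
    exact mul_dvd_mul (pow_sub_one_dvd_zpow_sub_zpow x hneg) (pow_sub_one_dvd_zpow_sub_zpow x hab')

end ZMod

theorem eval_dickson_one_one_eq_of_modEq {p : ℕ} (hp : p.Prime) (hp2 : p ≠ 2) {j k l : ℕ}
    (h : (k : ℤ) ≡ l [ZMOD (p ^ j * ((p ^ 2 - 1) / 2) : ℕ)] ∨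
      (k : ℤ) ≡ -l [ZMOD (p ^ j * ((p ^ 2 - 1) / 2) : ℕ)]) (u : ZMod (p ^ (j + 1))) :
    (dickson 1 1 k).eval u = (dickson 1 1 l).eval u := by
  obtain ⟨S, _, f, x, hf, hu⟩ := exists_injective_units_add_inv u
  apply hf
  rw [map_eval_dickson_one_one, map_eval_dickson_one_one, hu, ← sub_eq_zero,
    ← (x ^ (k : ℤ)).mul_right_eq_zero, zpow_mul_eval_dickson_one_one_sub]
  rcases h with h | h
  · exact zpow_sub_mul_zpow_sub_eq_zero hp hp2 f hu h
  · simpa [mul_comm] using zpow_sub_mul_zpow_sub_eq_zero hp hp2 f hu h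

/-! ### Congruences forced by the identity -/

theorem exists_orderOf_eq_isUnit_sq_sub_one {p : ℕ} (hp : p.Prime) (hp5 : 5 ≤ p) {n : ℕ}
    (hn : 0 < n) :
    ∃ g : (ZMod (p ^ n))ˣ, orderOf g = (p ^ n).totient ∧ IsUnit ((g : ZMod (p ^ n)) ^ 2 - 1) := by
  have := ZMod.isCyclic_units_of_prime_pow p hp (by omega) n
  obtain ⟨g, hg⟩ := IsCyclic.exists_generator (α := (ZMod (p ^ n))ˣ)
  have : NeZero (p ^ n) := ⟨pow_ne_zero _ hp.ne_zero⟩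
  refine ⟨g, by rw [orderOf_eq_card_of_forall_mem_zpowers hg, Nat.card_eq_fintype_card,
    ZMod.card_units_eq_totient], ?_⟩
  have hunit : ∀ a : ℕ, 0 < a → a < p → IsUnit (a : ZMod (p ^ n)) := fun a ha hap ↦
    (ZMod.isUnit_natCast_iff_not_dvd_pow hp hn).mpr (Nat.not_dvd_of_pos_of_lt ha hap)
  -- A power of `g` equals `2`, so `g ^ 2 - 1` divides `2 ^ 2 - 1 = 3`.
  obtain ⟨w, hw⟩ := hunit 2 (by omega) (by omega)
  obtain ⟨i, hi⟩ := Submonoid.mem_powers_iff _ _ |>.mp (mem_powers_iff_mem_zpowers.mpr (hg w))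
  have hthree : ((3 : ℕ) : ZMod (p ^ n)) = ((g : ZMod (p ^ n)) ^ 2) ^ i - 1 := by
    rw [pow_right_comm, ← Units.val_pow_eq_pow_val g, hi, hw]
    norm_num
  exact isUnit_of_dvd_unit (hthree ▸ sub_one_dvd_pow_sub_one _ i) (hunit 3 (by omega) (by omega))

theorem isLocalRing_zmod_prime_pow {p : ℕ} (hp : p.Prime) {n : ℕ} (hn : 0 < n) :
    IsLocalRing (ZMod (p ^ n)) := by
  have := Fact.mk hp
  have : Nontrivial (ZMod (p ^ n)) := ZMod.nontrivial_iff.mpr (Nat.one_lt_pow hn.ne' hp.one_lt).ne'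
  exact .of_surjective' (PadicInt.toZModPow (p := p) n) (ZMod.ringHom_surjective _)

theorem exists_orderOf_eq_add_inv_eq_algebraMap (p : ℕ) [Fact p.Prime] :
    ∃ (x : (GaloisField p 2)ˣ) (u : ZMod p),
      orderOf x = p + 1 ∧ algebraMap (ZMod p) (GaloisField p 2) u = x + ↑x⁻¹ := by
  have hp1 := (Fact.out : p.Prime).one_lt
  obtain ⟨g, hg⟩ := IsCyclic.exists_ofOrder_eq_natCard (α := (GaloisField p 2)ˣ)
  rw [Nat.card_units, GaloisField.card p 2 two_ne_zero, ← one_pow 2, Nat.sq_sub_sq] at hg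
  have hord : orderOf (g ^ (p - 1)) = p + 1 := by
    rw [orderOf_pow_of_dvd (by omega) (hg ▸ dvd_mul_left _ _), hg,
      Nat.mul_div_cancel _ (by omega)]
  set x := g ^ (p - 1)
  have hxp : x ^ p = x⁻¹ :=
    eq_inv_of_mul_eq_one_left (by rw [← pow_succ, ← hord, pow_orderOf_eq_one])
  have hfix : (x + ↑x⁻¹ : GaloisField p 2) ^ p = x + ↑x⁻¹ := by
    rw [add_pow_char, ← Units.val_pow_eq_pow_val, ← Units.val_pow_eq_pow_val, inv_pow, hxp,
      inv_inv, add_comm]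
  have hle : ⊥ ≤ (algebraMap (ZMod p) (GaloisField p 2)).fieldRange := bot_le
  obtain ⟨u, hu⟩ := hle ((Subfield.mem_bot_iff_pow_eq_self (GaloisField p 2) p).mpr hfix)
  exact ⟨x, u, hord, hu⟩

theorem eval_dickson_one_one_eq_self_of_dvd {m n k : ℕ} (hmn : m ∣ n)
    (h : ∀ u : ZMod n, (dickson 1 1 k).eval u = u) (u : ZMod m) : (dickson 1 1 k).eval u = u := by
  obtain ⟨v, rfl⟩ := ZMod.castHom_surjective hmn u
  rw [← map_eval_dickson_one_one, h]

theorem modEq_or_modEq_neg_totient_prime_pow {p : ℕ} (hp : p.Prime) (hp5 : 5 ≤ p) {n k : ℕ}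
    (hn : 0 < n) (h : ∀ u : ZMod (p ^ n), (dickson 1 1 k).eval u = u) :
    (k : ℤ) ≡ 1 [ZMOD (p ^ n).totient] ∨ (k : ℤ) ≡ -1 [ZMOD (p ^ n).totient] := by
  have := isLocalRing_zmod_prime_pow hp hn
  obtain ⟨g, hord, hunit⟩ := exists_orderOf_eq_isUnit_sq_sub_one hp hp5 hn
  rw [← hord]
  exact modEq_or_modEq_neg_of_eval_dickson_one_one_eq (l := 1) (by rwa [mul_one])
    (by rw [h, dickson_one, eval_X])

theorem eval_derivative_dickson_one_one_eq_one {p : ℕ} (hp : p ≠ 0) {n k : ℕ} (hn : 1 < n)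
    (h : ∀ u : ZMod (p ^ n), (dickson 1 1 k).eval u = u) (u : ZMod p) :
    (derivative (dickson 1 1 k)).eval u = 1 := by
  obtain ⟨v, rfl⟩ := ZMod.intCast_surjective u
  have hdvd (a : ℤ) : (p : ℤ) ^ 2 ∣ (dickson 1 1 k - X : ℤ[X]).eval a := by
    have hself := eval_dickson_one_one_eq_self_of_dvd (pow_dvd_pow p hn) h a
    rw [← eq_intCast (Int.castRingHom _), ← map_eval_dickson_one_one, ← sub_eq_zero, ← map_sub,
      eq_intCast, ZMod.intCast_zmod_eq_zero_iff_dvd] at hself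
    simpa using hself
  have hderiv := dvd_eval_derivative_of_sq_dvd (mod_cast hp) _ v (hdvd v) (hdvd (v + p))
  rw [← ZMod.intCast_zmod_eq_zero_iff_dvd, derivative_sub, derivative_X, eval_sub, eval_one,
    Int.cast_sub, Int.cast_one, sub_eq_zero] at hderiv
  rwa [← eq_intCast (Int.castRingHom (ZMod p)), map_eval_derivative_dickson_one_one] at hderiv

theorem modEq_or_modEq_neg_add_one {p : ℕ} (hp : p.Prime) {k : ℕ}
    (h : ∀ u : ZMod p, (dickson 1 1 k).eval u = u) :
    (k : ℤ) ≡ 1 [ZMOD (p + 1 : ℕ)] ∨ (k : ℤ) ≡ -1 [ZMOD (p + 1 : ℕ)] := by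
  have := Fact.mk hp
  obtain ⟨x, u, hord, hu⟩ := exists_orderOf_eq_add_inv_eq_algebraMap p
  have hx : x ^ (2 * 1) ≠ 1 := pow_ne_one_of_lt_orderOf two_ne_zero (by have := hp.two_le; omega)
  rw [← hord]
  refine modEq_or_modEq_neg_of_eval_dickson_one_one_eq (l := 1) (isUnit_pow_sub_one hx) ?_
  rw [← hu, ← map_eval_dickson_one_one, h, dickson_one, eval_X]

theorem modEq_or_modEq_neg_lcm_add_one {p : ℕ} (hp : p.Prime) {n k : ℕ} (hn : 1 < n)
    (h : ∀ u : ZMod (p ^ n), (dickson 1 1 k).eval u = u) :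
    (k : ℤ) ≡ 1 [ZMOD p.lcm (p + 1)] ∨ (k : ℤ) ≡ -1 [ZMOD p.lcm (p + 1)] := by
  have := Fact.mk hp
  obtain ⟨x, u, hord, hu⟩ := exists_orderOf_eq_add_inv_eq_algebraMap p
  have hx : x ^ (2 * 1) ≠ 1 := pow_ne_one_of_lt_orderOf two_ne_zero (by have := hp.two_le; omega)
  rw [← hord]
  refine modEq_lcm_or_modEq_neg_lcm_of_eval_dickson_one_one_eq (l := 1) p hx ?_ ?_
  · rw [← hu, ← map_eval_dickson_one_one,
      eval_dickson_one_one_eq_self_of_dvd (dvd_pow_self p (by omega)) h, dickson_one, eval_X]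
  · rw [← hu, ← map_eval_derivative_dickson_one_one,
      eval_derivative_dickson_one_one_eq_one hp.ne_zero hn h, map_one, dickson_one, derivative_X,
      eval_one]

theorem forall_eval_dickson_one_one_eq_self_iff {p : ℕ} (hp : p.Prime) (hp5 : 5 ≤ p) {k : ℕ} :
    (∀ u : ZMod p, (dickson 1 1 k).eval u = u) ↔
      (k : ℤ) ≡ 1 [ZMOD ((p ^ 2 - 1) / 2 : ℕ)] ∨ (k : ℤ) ≡ -1 [ZMOD ((p ^ 2 - 1) / 2 : ℕ)] ∨
        (k : ℤ) ≡ p [ZMOD ((p ^ 2 - 1) / 2 : ℕ)] ∨ (k : ℤ) ≡ -p [ZMOD ((p ^ 2 - 1) / 2 : ℕ)] := by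
  have hlcm : (p - 1).lcm (p + 1) = (p ^ 2 - 1) / 2 := by
    simpa using lcm_pow_mul_sub_one_add_one (hp.odd_of_ne_two (by omega)) 0
  constructor
  · intro h
    have hminus : (p : ℤ) ≡ 1 [ZMOD (p - 1 : ℕ)] := by
      rw [Nat.cast_pred hp.pos]
      exact Int.modEq_sub p 1
    have hplus : (p : ℤ) ≡ -1 [ZMOD (p + 1 : ℕ)] := by
      simpa using Int.modEq_sub (p : ℤ) (-1)
    have hsplit :=
      modEq_or_modEq_neg_totient_prime_pow (n := 1) (k := k) hp hp5 one_pos (by rwa [pow_one])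
    rw [pow_one, Nat.totient_prime hp] at hsplit
    rw [← hlcm]
    rcases hsplit, modEq_or_modEq_neg_add_one hp h with ⟨h₁ | h₁, h₂ | h₂⟩
    · exact .inl (modEq_natCast_lcm h₁ h₂)
    · exact .inr (.inr (.inl (modEq_natCast_lcm (h₁.trans hminus.symm) (h₂.trans hplus.symm))))
    · exact .inr (.inr (.inr (modEq_natCast_lcm (h₁.trans hminus.neg.symm)
        (h₂.trans (by simpa using hplus.neg.symm)))))
    · exact .inr (.inl (modEq_natCast_lcm h₁ h₂))
  · have hback {l : ℕ} (h : (k : ℤ) ≡ l [ZMOD ((p ^ 2 - 1) / 2 : ℕ)] ∨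
        (k : ℤ) ≡ -l [ZMOD ((p ^ 2 - 1) / 2 : ℕ)]) :
        ∀ u : ZMod p, (dickson 1 1 k).eval u = (dickson 1 1 l).eval u := by
      have := eval_dickson_one_one_eq_of_modEq (j := 0) hp (by omega) (by simpa using h)
      rwa [zero_add, pow_one] at this
    rintro (h | h | h | h) u
    · simpa using hback (l := 1) (.inl h) u
    · simpa using hback (l := 1) (.inr h) u
    · exact (hback (.inl h) u).trans (eval_dickson_one_one_char hp u)
    · exact (hback (.inr h) u).trans (eval_dickson_one_one_char hp u)

theorem forall_eval_dickson_one_one_eq_self_iff_of_prime_pow {p : ℕ} (hp : p.Prime) (hp5 : 5 ≤ p)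
    {j k : ℕ} (hj : 0 < j) :
    (∀ u : ZMod (p ^ (j + 1)), (dickson 1 1 k).eval u = u) ↔
      (k : ℤ) ≡ 1 [ZMOD (p ^ j * ((p ^ 2 - 1) / 2) : ℕ)] ∨
        (k : ℤ) ≡ -1 [ZMOD (p ^ j * ((p ^ 2 - 1) / 2) : ℕ)] := by
  constructor
  · intro h
    have hsplit := modEq_or_modEq_neg_totient_prime_pow hp hp5 j.succ_pos h
    rw [Nat.totient_prime_pow_succ hp] at hsplit
    have hp_dvd : (p : ℤ) ∣ (p ^ j * (p - 1) : ℕ) :=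
      Int.natCast_dvd_natCast.mpr ((dvd_pow_self p hj.ne').mul_right _)
    have hlcm₁ : (p : ℤ) ∣ p.lcm (p + 1) := Int.natCast_dvd_natCast.mpr (Nat.dvd_lcm_left _ _)
    have hlcm₂ : ((p + 1 : ℕ) : ℤ) ∣ p.lcm (p + 1) :=
      Int.natCast_dvd_natCast.mpr (Nat.dvd_lcm_right _ _)
    have hne : ¬ (1 : ℤ) ≡ -1 [ZMOD p] := fun h ↦ by
      have := Int.le_of_dvd two_pos (by simpa using h.symm.dvd)
      omega
    rw [← lcm_pow_mul_sub_one_add_one (hp.odd_of_ne_two (by omega))]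
    rcases hsplit, modEq_or_modEq_neg_lcm_add_one hp (Nat.lt_add_of_pos_left hj) h with
      ⟨h₁ | h₁, h₂ | h₂⟩
    · exact .inl (modEq_natCast_lcm h₁ (h₂.of_dvd hlcm₂))
    · exact absurd ((h₁.of_dvd hp_dvd).symm.trans (h₂.of_dvd hlcm₁)) hne
    · exact absurd ((h₂.of_dvd hlcm₁).symm.trans (h₁.of_dvd hp_dvd)) hne
    · exact .inr (modEq_natCast_lcm h₁ (h₂.of_dvd hlcm₂))
  · intro h u
    simpa using eval_dickson_one_one_eq_of_modEq (l := 1) hp (by omega) (by simpa using h) u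

theorem dickson_identity_iff_odd_prime_pow_general (p : ℕ) (hp : p.Prime) (hp5 : 5 ≤ p)
    (e : ℕ) (k : ℕ) (m : ℕ) (hm : m = p ^ (e - 1) * ((p ^ 2 - 1) / 2)) :
    (e = 1 →
      ((∀ u : ZMod p, Polynomial.eval u (Polynomial.dickson 1 1 k) = u) ↔
        ((k : ℤ) ≡ 1 [ZMOD (m : ℕ)] ∨ (k : ℤ) ≡ -1 [ZMOD (m : ℕ)] ∨
          (k : ℤ) ≡ (p : ℤ) [ZMOD (m : ℕ)] ∨ (k : ℤ) ≡ -(p : ℤ) [ZMOD (m : ℕ)]))) ∧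
    (1 < e →
      ((∀ u : ZMod (p ^ e), Polynomial.eval u (Polynomial.dickson 1 1 k) = u) ↔
        ((k : ℤ) ≡ 1 [ZMOD (m : ℕ)] ∨ (k : ℤ) ≡ -1 [ZMOD (m : ℕ)]))) := by
  subst hm
  constructor
  · rintro rfl
    simpa using forall_eval_dickson_one_one_eq_self_iff hp hp5
  · intro he
    obtain ⟨j, rfl⟩ := Nat.exists_eq_add_of_lt he
    exact forall_eval_dickson_one_one_eq_self_iff_of_prime_pow hp hp5 (by omega)

theorem dickson_identity_iff_odd_prime_pow (p : ℕ) (hp : p.Prime) (hp5 : 5 ≤ p)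
    (e : ℕ) (he : 1 ≤ e) (k : ℕ) (hk : 0 < k)
    (m : ℕ) (hm : m = p ^ (e - 1) * ((p ^ 2 - 1) / 2)) (hgcd : Nat.gcd k m = 1) :
    (e = 1 →
      ((∀ u : ZMod p, Polynomial.eval u (Polynomial.dickson 1 1 k) = u) ↔
        ((k : ℤ) ≡ 1 [ZMOD (m : ℕ)] ∨ (k : ℤ) ≡ -1 [ZMOD (m : ℕ)] ∨
          (k : ℤ) ≡ (p : ℤ) [ZMOD (m : ℕ)] ∨ (k : ℤ) ≡ -(p : ℤ) [ZMOD (m : ℕ)]))) ∧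
    (1 < e →
      ((∀ u : ZMod (p ^ e), Polynomial.eval u (Polynomial.dickson 1 1 k) = u) ↔
        ((k : ℤ) ≡ 1 [ZMOD (m : ℕ)] ∨ (k : ℤ) ≡ -1 [ZMOD (m : ℕ)]))) := by
  exact dickson_identity_iff_odd_prime_pow_general p hp hp5 e k m hm
end

section
/- Let n = p_1^{e_1} ⋯ p_r^{e_r} be a product of powers of distinct odd primes and let k be a positive integer with gcd(k, w(n)) = 1. Then D_k(u, 1) = u for all u ∈ ℤ/nℤ if and only if for each i = 1, …, r there exists a positive integer a_i with gcd(a_i, l_i) = 1 such that D_{a_i}(u, 1) = u for all u ∈ ℤ/p_i^{e_i}ℤ and k ≡ a_i (mod l_i). -/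
/-!
The polynomials `C_k = D_k(·, 1)`, available as `Polynomial.Chebyshev.C` with indices in `ℤ`,
satisfy `C_m C_n = C_{m+n} + C_{m-n}` and `C_{mn} = C_m ∘ C_n`. Fix an integer `u` and an odd
prime `p`. Modulo `p`, `C_p(u) = u ^ p = u`, whence `(C_{p+1}(u) - 2) (C_{p-1}(u) - 2) = 0`. As
`N = (p² - 1) / 2` is a multiple of both `p + 1` and `p - 1`, it follows that `C_N(u) = 2`, which
makes `k ↦ C_k(u)` periodic with period `N`. A period `M` mod `p ^ e` lifts to the period `p M` mod
`p ^ (e + 1)`: with `p = 2 q + 1` and `c = k + q M`,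
`C_{k+pM} - C_k = (1 + C_M + C_{2M} + ⋯ + C_{qM}) (C_{c+M} - C_c)`, and the first factor is
`≡ 1 + 2 q = p` since `C_{jM}(u) ≡ C_0(u) = 2`. So whether `C_k` is the identity mod `p ^ e` depends
only on `k` mod `p ^ (e - 1) (p² - 1) / 2`, and the Chinese remainder theorem treats composite
moduli.
-/

open Polynomial

section CommRing

variable {R : Type*} [CommRing R] {u : R}

theorem chebyshevC_eval_mul_eval (u : R) (m n : ℤ) :
    (Chebyshev.C R m).eval u * (Chebyshev.C R n).eval u =
      (Chebyshev.C R (m + n)).eval u + (Chebyshev.C R (m - n)).eval u := by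
  rw [← eval_mul, Chebyshev.C_mul_C, eval_add]

theorem chebyshevC_eval_two_mul (u : R) (n : ℤ) :
    (Chebyshev.C R (2 * n)).eval u = (Chebyshev.C R n).eval u ^ 2 - 2 := by
  rw [Chebyshev.C_mul, eval_comp, Chebyshev.C_two, eval_sub, eval_pow, eval_X, eval_ofNat]

theorem chebyshevC_eval_sub_two_dvd_of_dvd (u : R) {m n : ℤ} (hmn : m ∣ n) :
    (Chebyshev.C R m).eval u - 2 ∣ (Chebyshev.C R n).eval u - 2 := by
  obtain ⟨j, rfl⟩ := hmn
  rw [mul_comm, Chebyshev.C_mul, eval_comp]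
  simpa only [Chebyshev.C_eval_two] using
    sub_dvd_eval_sub ((Chebyshev.C R m).eval u) 2 (Chebyshev.C R j)

theorem chebyshevC_eval_eq_two_of_dvd {m n : ℤ} (hmn : m ∣ n)
    (hm : (Chebyshev.C R m).eval u = 2) : (Chebyshev.C R n).eval u = 2 := by
  simpa only [hm, sub_self, zero_dvd_iff, sub_eq_zero] using
    chebyshevC_eval_sub_two_dvd_of_dvd u hmn

theorem chebyshevC_eval_add_one_eq_two_or_sub_one_eq_two [NoZeroDivisors R] {q : ℤ}
    (hq : (Chebyshev.C R q).eval u = u) :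
    (Chebyshev.C R (q + 1)).eval u = 2 ∨ (Chebyshev.C R (q - 1)).eval u = 2 := by
  have hsum := chebyshevC_eval_mul_eval u q 1
  have hprod := chebyshevC_eval_mul_eval u (q + 1) (q - 1)
  rw [Chebyshev.C_one, eval_X, hq] at hsum
  rw [show q + 1 + (q - 1) = 2 * q by ring, show q + 1 - (q - 1) = 2 * 1 by ring,
    chebyshevC_eval_two_mul, chebyshevC_eval_two_mul, Chebyshev.C_one, eval_X, hq] at hprod
  have hzero : ((Chebyshev.C R (q + 1)).eval u - 2) * ((Chebyshev.C R (q - 1)).eval u - 2) = 0 := by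
    linear_combination hprod + 2 * hsum
  simpa only [mul_eq_zero, sub_eq_zero] using hzero

theorem chebyshevC_eval_periodic_of_eval_eq_two [IsReduced R] {N : ℤ}
    (hN : (Chebyshev.C R N).eval u = 2) :
    Function.Periodic (fun k : ℤ ↦ (Chebyshev.C R k).eval u) N := by
  intro k
  have hsum := chebyshevC_eval_mul_eval u k N
  have hprod := chebyshevC_eval_mul_eval u (k + N) (k - N)
  rw [show k + N + (k - N) = 2 * k by ring, show k + N - (k - N) = 2 * N by ring,
    chebyshevC_eval_two_mul, chebyshevC_eval_two_mul, hN] at hprod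
  rw [hN] at hsum
  have hsq : ((Chebyshev.C R (k + N)).eval u - (Chebyshev.C R k).eval u) ^ 2 = 0 := by
    linear_combination -(Chebyshev.C R (k + N)).eval u * hsum - hprod
  exact sub_eq_zero.mp (pow_eq_zero_iff two_ne_zero |>.mp hsq)

theorem chebyshevC_eval_add_mul_sub_eval_sub_mul (u : R) (k N : ℤ) (q : ℕ) :
    (Chebyshev.C R (k + (q + 1) * N)).eval u - (Chebyshev.C R (k - q * N)).eval u =
      (1 + ∑ j ∈ Finset.range q, (Chebyshev.C R ((j + 1) * N)).eval u) *
        ((Chebyshev.C R (k + N)).eval u - (Chebyshev.C R k).eval u) := by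
  induction q with
  | zero => simp
  | succ q ih =>
    have hright := chebyshevC_eval_mul_eval u (k + N) ((q + 1) * N)
    have hleft := chebyshevC_eval_mul_eval u k ((q + 1) * N)
    rw [show k + N + (q + 1) * N = k + (q + 1 + 1) * N by ring,
      show k + N - (q + 1) * N = k - q * N by ring] at hright
    rw [Finset.sum_range_succ]
    push_cast
    linear_combination ih - hright + hleft

theorem chebyshevC_eval_sub_two_dvd_one_add_sum_sub (u : R) (N : ℤ) (q : ℕ) :
    (Chebyshev.C R N).eval u - 2 ∣
      1 + ∑ j ∈ Finset.range q, (Chebyshev.C R ((j + 1) * N)).eval u - (2 * q + 1 : ℕ) := by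
  have hsum : 1 + ∑ j ∈ Finset.range q, (Chebyshev.C R ((j + 1) * N)).eval u - (2 * q + 1 : ℕ) =
      ∑ j ∈ Finset.range q, ((Chebyshev.C R ((j + 1) * N)).eval u - 2) := by
    rw [Finset.sum_sub_distrib, Finset.sum_const, Finset.card_range, nsmul_eq_mul]
    push_cast
    ring
  rw [hsum]
  exact Finset.dvd_sum fun j _ ↦ chebyshevC_eval_sub_two_dvd_of_dvd u (dvd_mul_left N _)

theorem mul_dvd_chebyshevC_eval_sub_of_odd {a : R} {m : ℕ} (hm : Odd m) (hma : (m : R) ∣ a)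
    {N : ℤ} (h : ∀ k : ℤ, a ∣ (Chebyshev.C R (k + N)).eval u - (Chebyshev.C R k).eval u) (k : ℤ) :
    m * a ∣ (Chebyshev.C R (k + m * N)).eval u - (Chebyshev.C R k).eval u := by
  obtain ⟨q, rfl⟩ := hm
  have htwo : ((2 * q + 1 : ℕ) : R) ∣ (Chebyshev.C R N).eval u - 2 :=
    hma.trans (by simpa using h 0)
  have hsum : ((2 * q + 1 : ℕ) : R) ∣
      1 + ∑ j ∈ Finset.range q, (Chebyshev.C R ((j + 1) * N)).eval u :=
    dvd_sub_self_right.mp (htwo.trans (chebyshevC_eval_sub_two_dvd_one_add_sum_sub u N q))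
  have hfactor := chebyshevC_eval_add_mul_sub_eval_sub_mul u (k + q * N) N q
  rw [show k + q * N + (q + 1) * N = k + (2 * q + 1 : ℕ) * N by push_cast; ring,
    add_sub_cancel_right] at hfactor
  rw [hfactor]
  exact mul_dvd_mul hsum (h _)

theorem pow_succ_dvd_chebyshevC_eval_sub_of_odd {m : ℕ} (hm : Odd m) {N : ℤ}
    (h : ∀ k : ℤ, (m : R) ∣ (Chebyshev.C R (k + N)).eval u - (Chebyshev.C R k).eval u)
    (e : ℕ) (k : ℤ) :
    (m : R) ^ (e + 1) ∣ (Chebyshev.C R (k + m ^ e * N)).eval u - (Chebyshev.C R k).eval u := by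
  induction e generalizing k with
  | zero => simpa using h k
  | succ e ih =>
    rw [pow_succ' _ (e + 1), pow_succ' (m : ℤ) e, mul_assoc]
    exact mul_dvd_chebyshevC_eval_sub_of_odd hm (dvd_pow_self _ e.succ_ne_zero) ih k

end CommRing

theorem chebyshevC_eval_zmod_eq_two {p : ℕ} [Fact p.Prime] (hodd : Odd p) (u : ZMod p) :
    (Chebyshev.C (ZMod p) ((p ^ 2 - 1) / 2 : ℕ)).eval u = 2 := by
  have hfix : (Chebyshev.C (ZMod p) p).eval u = u := by
    rw [← dickson_one_one_eq_chebyshev_C, dickson_one_one_zmod_p, eval_X_pow, ZMod.pow_card]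
  obtain ⟨t, rfl⟩ := hodd
  have hN : ((2 * t + 1) ^ 2 - 1) / 2 = 2 * t * (t + 1) := by
    rw [show (2 * t + 1) ^ 2 = 2 * (2 * t * (t + 1)) + 1 by ring]
    simp
  rw [hN]
  rcases chebyshevC_eval_add_one_eq_two_or_sub_one_eq_two hfix with h | h
  · exact chebyshevC_eval_eq_two_of_dvd ⟨t, by push_cast; ring⟩ h
  · exact chebyshevC_eval_eq_two_of_dvd ⟨t + 1, by push_cast; ring⟩ h

theorem intCast_chebyshevC_eval (R : Type*) [CommRing R] (k u : ℤ) :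
    (((Chebyshev.C ℤ k).eval u : ℤ) : R) = (Chebyshev.C R k).eval (u : R) := by
  simpa using Chebyshev.algebraMap_eval_C (R' := R) u k

theorem dickson_eval_zmod_prime_pow_periodic {p e : ℕ} (hp : p.Prime) (hodd : Odd p) (he : 1 ≤ e)
    (u : ZMod (p ^ e)) :
    Function.Periodic (fun k : ℕ ↦ (dickson 1 1 k).eval u) (p ^ (e - 1) * ((p ^ 2 - 1) / 2)) := by
  have := Fact.mk hp
  obtain ⟨d, rfl⟩ := Nat.exists_eq_add_of_le' he
  obtain ⟨u, rfl⟩ := ZMod.intCast_surjective u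
  have hmodp (k : ℤ) : (p : ℤ) ∣
      (Chebyshev.C ℤ (k + ((p ^ 2 - 1) / 2 : ℕ))).eval u - (Chebyshev.C ℤ k).eval u := by
    rw [← ZMod.intCast_eq_intCast_iff_dvd_sub, intCast_chebyshevC_eval, intCast_chebyshevC_eval]
    exact (chebyshevC_eval_periodic_of_eval_eq_two (chebyshevC_eval_zmod_eq_two hodd u) k).symm
  intro k
  simp only [dickson_one_one_eq_chebyshev_C, ← intCast_chebyshevC_eval]
  rw [eq_comm, ZMod.intCast_eq_intCast_iff_dvd_sub]
  exact_mod_cast pow_succ_dvd_chebyshevC_eval_sub_of_odd hodd hmodp d k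

theorem forall_dickson_eval_zmod_eq_self_iff_dvd (n k : ℕ) :
    (∀ u : ZMod n, (dickson 1 1 k).eval u = u) ↔
      ∀ u : ℤ, (n : ℤ) ∣ u - (Chebyshev.C ℤ k).eval u := by
  simp only [ZMod.intCast_surjective.forall, dickson_one_one_eq_chebyshev_C,
    ← intCast_chebyshevC_eval, ZMod.intCast_eq_intCast_iff_dvd_sub]

theorem forall_dickson_eval_zmod_prod_eq_self_iff {ι : Type*} [Fintype ι] {m : ι → ℕ}
    (hm : Pairwise (Function.onFun Nat.Coprime m)) (k : ℕ) :
    (∀ u : ZMod (∏ i, m i), (dickson 1 1 k).eval u = u) ↔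
      ∀ i, ∀ u : ZMod (m i), (dickson 1 1 k).eval u = u := by
  simp only [forall_dickson_eval_zmod_eq_self_iff_dvd, Nat.cast_prod]
  refine ⟨fun h i u ↦ (Finset.dvd_prod_of_mem _ (Finset.mem_univ i)).trans (h u), fun h u ↦ ?_⟩
  exact Fintype.prod_dvd_of_coprime (fun i j hij ↦ Nat.isCoprime_iff_coprime.mpr (hm hij))
    fun i ↦ h i u

theorem dickson_identity_iff_local_odd_general {ι : Type*} [Fintype ι] (p e : ι → ℕ)
    (hp : ∀ i, (p i).Prime) (hodd : ∀ i, Odd (p i)) (hinj : p.Injective) (he : ∀ i, 1 ≤ e i)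
    (k : ℕ) (hk : 0 < k) :
    (∀ u : ZMod (∏ i, p i ^ e i), (dickson 1 1 k).eval u = u) ↔
      ∀ i, ∃ a : ℕ, 0 < a ∧ (∀ u : ZMod (p i ^ e i), (dickson 1 1 a).eval u = u) ∧
        k ≡ a [MOD p i ^ (e i - 1) * ((p i ^ 2 - 1) / 2)] := by
  have hcop : Pairwise (Function.onFun Nat.Coprime fun i ↦ p i ^ e i) := fun i j hij ↦
    Nat.coprime_pow_primes _ _ (hp i) (hp j) (hinj.ne hij)
  rw [forall_dickson_eval_zmod_prod_eq_self_iff hcop]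
  refine forall_congr' fun i ↦ ⟨fun h ↦ ⟨k, hk, h, .rfl⟩, fun ⟨a, _, ha, hka⟩ u ↦ ?_⟩
  have hper := dickson_eval_zmod_prime_pow_periodic (hp i) (hodd i) (he i) u
  calc (dickson 1 1 k).eval u
    _ = (dickson 1 1 a).eval u := by rw [← hper.map_mod_nat k, hka, hper.map_mod_nat a]
    _ = u := ha u

theorem dickson_identity_iff_local_odd
    (r : ℕ) (p ee : Fin r → ℕ)
    (hp : ∀ i, Nat.Prime (p i)) (hodd : ∀ i, Odd (p i)) (hmono : StrictMono p)
    (hee : ∀ i, 1 ≤ ee i)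
    (n : ℕ) (hn : n = ∏ i, p i ^ ee i)
    (l : Fin r → ℕ) (hl : ∀ i, l i = p i ^ (ee i - 1) * ((p i ^ 2 - 1) / 2))
    (w : ℕ) (hw : w = Finset.univ.lcm l)
    (k : ℕ) (hk : 0 < k) (hgcd : Nat.gcd k w = 1) :
    (∀ u : ZMod n, Polynomial.eval u (Polynomial.dickson 1 1 k) = u) ↔
      ∀ i, ∃ a : ℕ, 0 < a ∧ Nat.gcd a (l i) = 1 ∧
        (∀ u : ZMod (p i ^ ee i), Polynomial.eval u (Polynomial.dickson 1 1 a) = u) ∧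
        k ≡ a [MOD l i] := by
  have hgcd_l (i) (a : ℕ) (hka : k ≡ a [MOD l i]) : Nat.gcd a (l i) = 1 :=
    hka.gcd_eq.symm.trans <|
      Nat.Coprime.coprime_dvd_right (hw ▸ Finset.dvd_lcm (Finset.mem_univ i)) hgcd
  rw [hn, dickson_identity_iff_local_odd_general p ee hp hodd hmono.injective hee k hk]
  simp only [← hl]
  exact forall_congr' fun i ↦ exists_congr fun a ↦ by have := hgcd_l i a; tauto
end
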